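/- Any variety in a finite algebraic signature which is defined by finitely many laws involving only constants (i.e., finitely many equations between closed terms, containing no variables) has uniformly decidable word problem. -/

import Mathlib

/-!
For closed laws, all substitution instances of a law coincide, so `θ_𝒫` is the congruence generated
by a finite list of equations between terms in the generators, and congruence closure
decides it. Let `S` be the finite set of all subterms of the terms in these equations and in the
queried pair, and let `T` be the least equivalence on `S` that contains the equations and relates
`f(u₁, …, uₙ)` to `f(v₁, …, vₙ)` (both in `S`) whenever it relates every `uᵢ` to `vᵢ`.
Then `T` is the restriction of `θ_𝒫` to `S`: clearly `T ⊆ θ_𝒫` (`rel_sound`), and conversely the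
`T`-classes form a finite partial algebra, which extends to a total one by adding an
undefined value. Evaluating terms there (`ev`) sends a term of `S` to its `T`-class (`ev_eq`), and the
kernel of the evaluation is a congruence containing the equations (`ev_congr`).
The relation `T` is reached by iterating a monotone operator on subsets of `S × S`, which
stabilises after at most `|S × S| + 1` steps (`closure_fixed`).

For computability, a term is represented by its word in Polish notation over `ℕ` (`wordOf`),
whose code as a list is the code of the term (`encode_eq`). A right-to-left pass with a stack
(`parse`) extracts the subterms, and every ingredient is primitive recursive.
-/

open FirstOrder Language

/-- The congruence on the absolutely free algebra (term algebra) `L.Term X` generated by a set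
`R` of relations together with all substitution instances of a set `E` of laws (equations between
terms with variables from `ℕ`). -/
inductive PresEqv {L : FirstOrder.Language} {X : Type*}
    (E : Set (L.Term ℕ × L.Term ℕ)) (R : Set (L.Term X × L.Term X)) :
    L.Term X → L.Term X → Prop
  | rel {s t : L.Term X} : (s, t) ∈ R → PresEqv E R s t
  | law (p : L.Term ℕ × L.Term ℕ) (σ : ℕ → L.Term X) :
      p ∈ E → PresEqv E R (p.1.subst σ) (p.2.subst σ)
  | refl (t : L.Term X) : PresEqv E R t t
  | symm {s t : L.Term X} : PresEqv E R s t → PresEqv E R t s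
  | trans {s t u : L.Term X} : PresEqv E R s t → PresEqv E R t u → PresEqv E R s u
  | app {n : ℕ} (f : L.Functions n) (ts us : Fin n → L.Term X) :
      (∀ i, PresEqv E R (ts i) (us i)) →
      PresEqv E R (Term.func f ts) (Term.func f us)

/-- A binary relation on an encodable type is decidable (relative to the encoding) if some
computable boolean function decides it on codes. -/
def DecidableRelVia {α : Type*} [Encodable α] (r : α → α → Prop) : Prop :=
  ∃ f : ℕ → Bool, Computable f ∧
    ∀ a b : α, r a b ↔ f (Nat.pair (Encodable.encode a) (Encodable.encode b)) = true

/-- A set of an encodable type is decidable (relative to the encoding). -/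
def DecidableSetVia {α : Type*} [Encodable α] (s : Set α) : Prop :=
  ∃ f : ℕ → Bool, Computable f ∧ ∀ a : α, a ∈ s ↔ f (Encodable.encode a) = true

/-- The variety with laws `E` has uniformly solvable word problem: a single algorithm decides,
given a finite presentation (finitely many generators `Fin k` and a finite list `R` of relations)
and a pair of terms, whether the pair lies in the congruence `θ_𝒫`. -/
def UniformWP (L : FirstOrder.Language) [∀ k : ℕ, Encodable (L.Term (Fin k))]
    (E : Set (L.Term ℕ × L.Term ℕ)) : Prop :=
  ∃ f : ℕ → Bool, Computable f ∧
    ∀ (k : ℕ) (R : List (L.Term (Fin k) × L.Term (Fin k))) (s t : L.Term (Fin k)),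
      PresEqv E {p | p ∈ R} s t ↔
        f (Encodable.encode
            (⟨k, (R, s, t)⟩ : Σ k : ℕ,
              List (L.Term (Fin k) × L.Term (Fin k)) × L.Term (Fin k) × L.Term (Fin k))) = true

/-- The variety with laws `E` has solvable word problem: for each finite presentation the
congruence `θ_𝒫` is decidable. -/
def SolvableWP (L : FirstOrder.Language) [∀ k : ℕ, Encodable (L.Term (Fin k))]
    (E : Set (L.Term ℕ × L.Term ℕ)) : Prop :=
  ∀ (k : ℕ) (R : List (L.Term (Fin k) × L.Term (Fin k))),
    DecidableRelVia (PresEqv E {p | p ∈ R})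

/-- The finite algebraic signature with `N` operation symbols of arities `ar`. -/
def FinLang (N : ℕ) (ar : Fin N → ℕ) : FirstOrder.Language :=
  ⟨fun n => {i : Fin N // ar i = n}, fun _ => Empty⟩

instance (N : ℕ) (ar : Fin N → ℕ) (X : Type*) [Encodable X] :
    Encodable ((FinLang N ar).Term X) :=
  inferInstanceAs (Encodable (Language.Term ⟨fun n => {i : Fin N // ar i = n}, fun _ => Empty⟩ X))

/-- A term is closed (involves only constants and operations, no variables) if it is the
relabelling of a term with variables from `Empty`. -/
def IsClosedTerm {L : FirstOrder.Language} {X : Type*} (t : L.Term X) : Prop :=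
  ∃ s : L.Term Empty, t = s.relabel (fun e => e.elim)

namespace GroundWP

open Encodable

/-! ### Congruence closure on words -/

/-- A word over `ℕ`, meant as a term in Polish notation. -/
abbrev Wd := List ℕ

/-- A term split into the code of its root symbol and the words of its immediate subterms. -/
abbrev Nd := ℕ × List Wd

/-- The word of the term with the given root and immediate subterms. -/
def word (μ : Nd) : Wd := μ.1 :: μ.2.flatten

/-- The arity of a symbol code: even codes are variables, and `2 * Nat.pair n i + 1` is the `i`-th
operation symbol, of arity `n`. -/
def arity (a : ℕ) : ℕ := (a % 2) * (a / 2).unpair.1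

/-- Processing of one symbol by the parser. The state consists of the stack of the words of the
terms read so far and the list of all subterms seen. -/
def pstep (a : ℕ) (st : List Wd × List Nd) : List Wd × List Nd :=
  ((a :: (st.1.take (arity a)).flatten) :: st.1.drop (arity a), (a, st.1.take (arity a)) :: st.2)

/-- Right-to-left parsing of a word. -/
def parse (x : Wd) : List Wd × List Nd := x.foldr pstep ([], [])

/-- All subterms of the terms in a list of pairs of words. -/
def nodes (l : List (Wd × Wd)) : List Nd := l.flatMap fun p => (parse p.1).2 ++ (parse p.2).2

/-- All pairs of members of a list. -/
def pairs (l : List Nd) : List (Nd × Nd) := l.flatMap fun μ => l.map fun ν => (μ, ν)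

/-- The relation on words induced by a list of pairs. -/
def Rel (U : List (Nd × Nd)) (x y : Wd) : Prop := ∃ q ∈ U, word q.1 = x ∧ word q.2 = y

/-- The pair `q` follows in one step from the equations `eqs` and the pairs in `U`, by reflexivity,
an equation, symmetry, transitivity, or compatibility with the operations. -/
def Cond (eqs : List (Wd × Wd)) (U : List (Nd × Nd)) (q : Nd × Nd) : Prop :=
  word q.1 = word q.2 ∨ (∃ e ∈ eqs, e = (word q.1, word q.2)) ∨ Rel U (word q.2) (word q.1) ∨
    (∃ r ∈ U, word r.1 = word q.1 ∧ Rel U (word r.2) (word q.2)) ∨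
    (q.1.1 = q.2.1 ∧ ∀ i < q.1.2.length, Rel U (q.1.2.getD i []) (q.2.2.getD i []))

open Classical in
/-- The pairs in `P` that follow in one step from `eqs` and `U`. -/
noncomputable def step (eqs : List (Wd × Wd)) (P U : List (Nd × Nd)) : List (Nd × Nd) :=
  P.filter fun q => Cond eqs U q

/-- The congruence closure of `eqs` inside `P`. -/
noncomputable def closure (eqs : List (Wd × Wd)) (P : List (Nd × Nd)) : List (Nd × Nd) :=
  (step eqs P)^[P.length + 1] []

/-- The decision procedure on words: congruence closure of `eqs` on the subterms of `eqs`, `x`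
and `y` relates `x` to `y`. -/
def Decides (eqs : List (Wd × Wd)) (x y : Wd) : Prop :=
  Rel (closure eqs (pairs (nodes ((x, y) :: eqs)))) x y

theorem Rel.mono {U V : List (Nd × Nd)} (h : U ⊆ V) {x y : Wd} : Rel U x y → Rel V x y :=
  fun ⟨q, hq, e⟩ => ⟨q, h hq, e⟩

theorem Cond.mono {eqs : List (Wd × Wd)} {U V : List (Nd × Nd)} (h : U ⊆ V) {q : Nd × Nd} :
    Cond eqs U q → Cond eqs V q := by
  rintro (h1 | h1 | h1 | ⟨r, hr, h1, h2⟩ | ⟨h1, h2⟩)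
  · exact .inl h1
  · exact .inr (.inl h1)
  · exact .inr (.inr (.inl (h1.mono h)))
  · exact .inr (.inr (.inr (.inl ⟨r, h hr, h1, h2.mono h⟩)))
  · exact .inr (.inr (.inr (.inr ⟨h1, fun i hi => (h2 i hi).mono h⟩)))

theorem step_mono (eqs : List (Wd × Wd)) (P : List (Nd × Nd)) {U V : List (Nd × Nd)} (h : U ⊆ V) :
    (step eqs P U).Sublist (step eqs P V) := by
  unfold step
  apply List.monotone_filter_right
  intro q hq
  simpa using (Cond.mono h (by simpa using hq))

theorem iterate_sublist (eqs : List (Wd × Wd)) (P : List (Nd × Nd)) (n : ℕ) :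
    ((step eqs P)^[n] []).Sublist ((step eqs P)^[n + 1] []) := by
  induction n with
  | zero => simp
  | succ n ih =>
    rw [Function.iterate_succ_apply', Function.iterate_succ_apply' _ (n + 1)]
    exact step_mono eqs P ih.subset

/-- As long as the iteration has not stabilised, each step adds at least one pair. -/
theorem iterate_fixed_or_le (eqs : List (Wd × Wd)) (P : List (Nd × Nd)) (n : ℕ) :
    step eqs P ((step eqs P)^[n] []) = (step eqs P)^[n] [] ∨
      n ≤ ((step eqs P)^[n] []).length := by
  induction n with
  | zero => simp
  | succ n ih =>
    rcases ih with h | h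
    · left
      rw [Function.iterate_succ_apply', h, h]
    · have hs := iterate_sublist eqs P n
      by_cases he : (step eqs P)^[n] [] = (step eqs P)^[n + 1] []
      · left
        rw [← he, ← Function.iterate_succ_apply' (step eqs P) n, ← he]
      · right
        have h1 := hs.length_le
        have h2 : ((step eqs P)^[n] []).length ≠ ((step eqs P)^[n + 1] []).length :=
          fun h => he (hs.eq_of_length h)
        omega

theorem step_subset (eqs : List (Wd × Wd)) (P U : List (Nd × Nd)) : step eqs P U ⊆ P :=
  List.filter_subset_self _

theorem closure_fixed (eqs : List (Wd × Wd)) (P : List (Nd × Nd)) :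
    step eqs P (closure eqs P) = closure eqs P := by
  rcases iterate_fixed_or_le eqs P (P.length + 1) with h | h
  · exact h
  · rw [Function.iterate_succ_apply'] at h
    have : (step eqs P ((step eqs P)^[P.length] [])).length ≤ P.length :=
      List.length_filter_le _ _
    omega

theorem mem_closure {eqs : List (Wd × Wd)} {P : List (Nd × Nd)} {q : Nd × Nd} :
    q ∈ closure eqs P ↔ q ∈ P ∧ Cond eqs (closure eqs P) q := by
  conv_lhs => rw [← closure_fixed]
  simp [step]

theorem mem_pairs {l : List Nd} {q : Nd × Nd} : q ∈ pairs l ↔ q.1 ∈ l ∧ q.2 ∈ l := by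
  obtain ⟨μ, ν⟩ := q
  simp [pairs]

section Closure

variable {eqs : List (Wd × Wd)} {l : List Nd}

theorem rel_of_cond {μ ν : Nd} (hμ : μ ∈ l) (hν : ν ∈ l)
    (h : Cond eqs (closure eqs (pairs l)) (μ, ν)) :
    Rel (closure eqs (pairs l)) (word μ) (word ν) :=
  ⟨(μ, ν), mem_closure.2 ⟨mem_pairs.2 ⟨hμ, hν⟩, h⟩, rfl, rfl⟩

theorem rel_symm {x y : Wd} (h : Rel (closure eqs (pairs l)) x y) :
    Rel (closure eqs (pairs l)) y x := by
  obtain ⟨q, hq, rfl, rfl⟩ := h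
  have hm := mem_pairs.1 (mem_closure.1 hq).1
  exact rel_of_cond hm.2 hm.1 (.inr (.inr (.inl ⟨q, hq, rfl, rfl⟩)))

theorem rel_trans {x y z : Wd} (h : Rel (closure eqs (pairs l)) x y)
    (h' : Rel (closure eqs (pairs l)) y z) : Rel (closure eqs (pairs l)) x z := by
  obtain ⟨q, hq, rfl, rfl⟩ := h
  obtain ⟨r, hr, h1, rfl⟩ := h'
  have hm := mem_pairs.1 (mem_closure.1 hq).1
  have hm' := mem_pairs.1 (mem_closure.1 hr).1
  exact rel_of_cond hm.1 hm'.2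
    (.inr (.inr (.inr (.inl ⟨q, hq, rfl, ⟨r, hr, h1, rfl⟩⟩))))

theorem rel_refl {μ : Nd} (hμ : μ ∈ l) : Rel (closure eqs (pairs l)) (word μ) (word μ) :=
  rel_of_cond hμ hμ (.inl rfl)

end Closure

/-! ### Terms as words -/

section Terms

variable {N : ℕ} {ar : Fin N → ℕ} {X : Type} [Encodable X]

/-- The code of an operation symbol. -/
def fcode {n : ℕ} (f : (FinLang N ar).Functions n) : ℕ :=
  2 * Nat.pair n (f : {i : Fin N // ar i = n}).1.1 + 1

/-- The Polish notation of a term, with symbols replaced by their codes. -/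
def wordOf : (FinLang N ar).Term X → Wd
  | .var x => [2 * encode x]
  | .func (l := n) f ts => fcode f :: (List.finRange n).flatMap fun i => wordOf (ts i)

/-- The root symbol and the immediate subterms of a term. -/
def root : (FinLang N ar).Term X → Nd
  | .var x => (2 * encode x, [])
  | .func (l := n) f ts => (fcode f, (List.finRange n).map fun i => wordOf (ts i))

/-- The list of all subterms of a term. -/
def subs : (FinLang N ar).Term X → List Nd
  | .var x => [(2 * encode x, [])]
  | .func (l := n) f ts =>
    (fcode f, (List.finRange n).map fun i => wordOf (ts i)) ::
      (List.finRange n).flatMap fun i => subs (ts i)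

theorem word_root (t : (FinLang N ar).Term X) : word (root t) = wordOf t := by
  cases t <;> simp [word, root, wordOf, List.flatMap]

theorem root_mem_subs (t : (FinLang N ar).Term X) : root t ∈ subs t := by
  cases t <;> simp [root, subs]

theorem exists_root_of_mem_subs (t : (FinLang N ar).Term X) :
    ∀ μ ∈ subs t, ∃ u : (FinLang N ar).Term X, μ = root u := by
  induction t with
  | var x =>
    intro μ hμ
    exact ⟨.var x, by simpa [subs, root] using hμ⟩
  | func f ts ih =>
    intro μ hμ
    rw [subs, List.mem_cons, List.mem_flatMap] at hμ
    rcases hμ with rfl | ⟨i, -, hi⟩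
    · exact ⟨.func f ts, rfl⟩
    · exact ih i μ hi

theorem arity_fcode {n : ℕ} (f : (FinLang N ar).Functions n) : arity (fcode f) = n := by
  have h1 : (2 * Nat.pair n (f : {i : Fin N // ar i = n}).1.1 + 1) % 2 = 1 := by omega
  have h2 : (2 * Nat.pair n (f : {i : Fin N // ar i = n}).1.1 + 1) / 2 =
    Nat.pair n (f : {i : Fin N // ar i = n}).1.1 := by omega
  simp [arity, fcode, h1, h2]

/-- Correctness of the parser: reading the word of `t` pushes `t` and records its subterms. -/
theorem foldr_pstep (t : (FinLang N ar).Term X) :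
    ∀ st, (wordOf t).foldr pstep st = (wordOf t :: st.1, subs t ++ st.2) := by
  induction t with
  | var x => intro st; simp [wordOf, subs, pstep, arity]
  | @func n f ts ih =>
    intro st
    have key : ∀ l : List (Fin n), (l.flatMap fun i => wordOf (ts i)).foldr pstep st =
        ((l.map fun i => wordOf (ts i)) ++ st.1, (l.flatMap fun i => subs (ts i)) ++ st.2) := by
      intro l
      induction l with
      | nil => rfl
      | cons i l ihl => simp [List.foldr_append, ihl, ih]
    have hl : ((List.finRange n).map fun i => wordOf (ts i)).length = n := by simp
    rw [wordOf, List.foldr_cons, key, pstep, arity_fcode, subs, List.take_left' hl,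
      List.drop_left' hl]
    simp [List.flatMap]

theorem parse_wordOf (t : (FinLang N ar).Term X) : (parse (wordOf t)).2 = subs t := by
  simp [parse, foldr_pstep]

theorem encode_list_map {α : Type*} [Encodable α] (l : List α) :
    encode l = encode (l.map encode) := by
  induction l with
  | nil => rfl
  | cons a l ih => simp [ih]

/-- The number coding a term is the number coding its word. -/
theorem encode_eq (t : (FinLang N ar).Term X) : encode t = encode (wordOf t) := by
  let F : FirstOrder.Language := ⟨fun n => {i : Fin N // ar i = n}, fun _ => Empty⟩
  have key : ∀ t : F.Term X, (Language.Term.listEncode t).map encode =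
      wordOf (t : (FinLang N ar).Term X) := by
    intro t
    induction t with
    | var x => simp [Language.Term.listEncode, wordOf]
    | func f ts ih =>
      simp [Language.Term.listEncode, wordOf, List.map_flatMap, ih]
      rfl
  rw [← key t, ← encode_list_map]
  rfl

theorem wordOf_injective : Function.Injective (wordOf : (FinLang N ar).Term X → Wd) := by
  intro s t h
  apply encode_injective
  rw [encode_eq, encode_eq, h]

theorem fcode_inj {n m : ℕ} {f : (FinLang N ar).Functions n} {g : (FinLang N ar).Functions m}
    (h : fcode f = fcode g) : n = m ∧ HEq f g := by
  have h' : Nat.pair n (f : {i : Fin N // ar i = n}).1.1 =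
      Nat.pair m (g : {i : Fin N // ar i = m}).1.1 := by
    unfold fcode at h; omega
  obtain ⟨rfl, h2⟩ := Nat.pair_eq_pair.1 h'
  exact ⟨rfl, heq_of_eq (Subtype.ext (Fin.ext h2))⟩

/-- Substituting into a closed term does not change it. -/
theorem wordOf_subst_closed {Y Z : Type} [Encodable Y] (c : (FinLang N ar).Term Empty)
    (g : Empty → Y) (σ : Y → (FinLang N ar).Term Z) [Encodable Z] :
    wordOf ((c.relabel g).subst σ) = wordOf (c.relabel g) := by
  induction c with
  | var x => exact x.elim
  | func f ts ih =>
    simp only [Language.Term.relabel, Language.Term.subst, wordOf, ih]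

/-! ### Correctness of congruence closure -/

section Correct

variable {E : Set ((FinLang N ar).Term ℕ × (FinLang N ar).Term ℕ)}
  {R : Set ((FinLang N ar).Term X × (FinLang N ar).Term X)} {eqs : List (Wd × Wd)}

/-- Two terms with the same root symbol and congruent immediate subterms are congruent. -/
theorem presEqv_of_root {u v : (FinLang N ar).Term X} (h : (root u).1 = (root v).1)
    (hc : ∀ i < (root u).2.length, ∃ u' v' : (FinLang N ar).Term X,
      (root u).2.getD i [] = wordOf u' ∧ (root v).2.getD i [] = wordOf v' ∧ PresEqv E R u' v') :
    PresEqv E R u v := by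
  cases u with
  | var x =>
    cases v with
    | var y =>
      have : x = y := by simpa [root] using h
      exact this ▸ .refl _
    | func g us => simp only [root, fcode] at h; omega
  | @func n f ts =>
    cases v with
    | var y => simp only [root, fcode] at h; omega
    | func g us =>
      obtain ⟨rfl, hfg⟩ := fcode_inj h
      obtain rfl := eq_of_heq hfg
      refine .app f ts us fun i => ?_
      obtain ⟨u', v', h1, h2, h3⟩ := hc i (by simp [root])
      simp [root] at h1 h2
      rw [wordOf_injective h1, wordOf_injective h2]
      exact h3

theorem rel_sound (hs : ∀ e ∈ eqs, ∃ u v : (FinLang N ar).Term X,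
      e = (wordOf u, wordOf v) ∧ PresEqv E R u v)
    {l : List Nd} (hl : ∀ μ ∈ l, ∃ u : (FinLang N ar).Term X, μ = root u) (n : ℕ) :
    ∀ x y, Rel ((step eqs (pairs l))^[n] []) x y → ∃ u v : (FinLang N ar).Term X,
      x = wordOf u ∧ y = wordOf v ∧ PresEqv E R u v := by
  induction n with
  | zero => rintro x y ⟨q, hq, -⟩; simp at hq
  | succ n ih =>
    rintro x y ⟨⟨μ, ν⟩, hq, rfl, rfl⟩
    rw [Function.iterate_succ_apply'] at hq
    generalize (step eqs (pairs l))^[n] [] = U at ih hq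
    simp only [step, List.mem_filter, decide_eq_true_eq, mem_pairs] at hq
    obtain ⟨⟨hμ, hν⟩, hc⟩ := hq
    obtain ⟨u, rfl⟩ := hl _ hμ
    obtain ⟨v, rfl⟩ := hl _ hν
    simp only [Cond, word_root] at hc ⊢
    rcases hc with h | ⟨e, he, h⟩ | h | ⟨r, hr, h1, h2⟩ | ⟨h1, h2⟩
    · exact ⟨u, u, rfl, h.symm, .refl u⟩
    · obtain ⟨u', v', h', h2⟩ := hs e he
      rw [h', Prod.mk.injEq] at h
      exact ⟨u', v', h.1.symm, h.2.symm, h2⟩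
    · obtain ⟨u', v', h1, h2, h3⟩ := ih _ _ h
      exact ⟨v', u', h2, h1, h3.symm⟩
    · obtain ⟨u₁, v₁, e1, e2, e3⟩ := ih _ _ ⟨r, hr, rfl, rfl⟩
      obtain ⟨u₂, v₂, e4, e5, e6⟩ := ih _ _ h2
      rw [e2] at e4
      obtain rfl := wordOf_injective e4
      exact ⟨u₁, v₂, h1.symm.trans e1, e5, e3.trans e6⟩
    · exact ⟨u, v, rfl, rfl, presEqv_of_root h1 fun i hi => ih _ _ (h2 i hi)⟩

/-- Evaluation of terms in the total algebra extending the partial algebra of classes of the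
congruence closure on the subterms in `l`. A class is represented by the set of its words, and
the undefined value by the empty set. -/
def ev (eqs : List (Wd × Wd)) (l : List Nd) : (FinLang N ar).Term X → Set Wd
  | .var x => {y | Rel (closure eqs (pairs l)) [2 * encode x] y}
  | .func (l := n) f ts => {y | ∃ cs : Fin n → Wd, (fcode f, (List.finRange n).map cs) ∈ l ∧
      (∀ i, cs i ∈ ev eqs l (ts i)) ∧
      Rel (closure eqs (pairs l)) (word (fcode f, (List.finRange n).map cs)) y}

theorem ev_eq (l : List Nd) (t : (FinLang N ar).Term X) :
    subs t ⊆ l → ev eqs l t = {y | Rel (closure eqs (pairs l)) (wordOf t) y} := by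
  induction t with
  | var x => intro _; rfl
  | @func n f ts ih =>
    intro h
    have hi : ∀ i, subs (ts i) ⊆ l := fun i μ hμ => h (by
      rw [subs]
      exact List.mem_cons_of_mem _ (List.mem_flatMap.2 ⟨i, List.mem_finRange i, hμ⟩))
    have hroot : root (.func f ts : (FinLang N ar).Term X) ∈ l := h (root_mem_subs _)
    ext y
    simp only [ev, Set.mem_ofPred_eq, ← word_root (.func f ts : (FinLang N ar).Term X)]
    constructor
    · rintro ⟨cs, hm, hcs, hy⟩
      refine rel_trans (rel_of_cond hroot hm (.inr (.inr (.inr (.inr ⟨rfl, fun i hin => ?_⟩))))) hy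
      have hin' : i < n := by simpa [root] using hin
      have := hcs ⟨i, hin'⟩
      rw [ih _ (hi _)] at this
      simpa [root, hin'] using this
    · intro hy
      refine ⟨fun i => wordOf (ts i), hroot, fun i => ?_, hy⟩
      rw [ih i (hi i)]
      have h := rel_refl (eqs := eqs) (hi i (root_mem_subs (ts i)))
      rw [word_root] at h
      exact h

theorem subs_subset_nodes {l : List (Wd × Wd)} {u v : (FinLang N ar).Term X}
    (h : (wordOf u, wordOf v) ∈ l) : subs u ⊆ nodes l ∧ subs v ⊆ nodes l := by
  constructor <;> intro μ hμ <;> refine List.mem_flatMap.2 ⟨_, h, ?_⟩ <;>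
    simp [parse_wordOf, hμ]

/-- Equations hold in the algebra of classes. -/
theorem ev_eq_of_mem {s t u v : (FinLang N ar).Term X} (h : (wordOf u, wordOf v) ∈ eqs) :
    ev eqs (nodes ((wordOf s, wordOf t) :: eqs)) u =
      ev eqs (nodes ((wordOf s, wordOf t) :: eqs)) v := by
  obtain ⟨hu, hv⟩ := subs_subset_nodes (List.mem_cons_of_mem (wordOf s, wordOf t) h)
  have key := rel_of_cond (eqs := eqs) (hu (root_mem_subs u)) (hv (root_mem_subs v))
    (.inr (.inl ⟨_, h, by simp only [word_root]⟩))
  simp only [word_root] at key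
  rw [ev_eq _ _ hu, ev_eq _ _ hv]
  ext y
  exact ⟨rel_trans (rel_symm key), rel_trans key⟩

theorem ev_congr (hr : ∀ p ∈ R, (wordOf p.1, wordOf p.2) ∈ eqs)
    (hl : ∀ p ∈ E, ∀ σ : ℕ → (FinLang N ar).Term X,
      (wordOf (p.1.subst σ), wordOf (p.2.subst σ)) ∈ eqs)
    {s t u v : (FinLang N ar).Term X} (h : PresEqv E R u v) :
    ev eqs (nodes ((wordOf s, wordOf t) :: eqs)) u =
      ev eqs (nodes ((wordOf s, wordOf t) :: eqs)) v := by
  induction h with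
  | rel h => exact ev_eq_of_mem (hr _ h)
  | law p σ h => exact ev_eq_of_mem (hl p h σ)
  | refl => rfl
  | symm _ ih => exact ih.symm
  | trans _ _ ih₁ ih₂ => exact ih₁.trans ih₂
  | app f ts us _ ih => simp only [ev, ih]

theorem presEqv_iff_decides (hs : ∀ e ∈ eqs, ∃ u v : (FinLang N ar).Term X,
      e = (wordOf u, wordOf v) ∧ PresEqv E R u v)
    (hr : ∀ p ∈ R, (wordOf p.1, wordOf p.2) ∈ eqs)
    (hl : ∀ p ∈ E, ∀ σ : ℕ → (FinLang N ar).Term X,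
      (wordOf (p.1.subst σ), wordOf (p.2.subst σ)) ∈ eqs)
    (s t : (FinLang N ar).Term X) :
    PresEqv E R s t ↔ Decides eqs (wordOf s) (wordOf t) := by
  constructor
  · intro h
    have := ev_congr (s := s) (t := t) hr hl h
    obtain ⟨h1, h2⟩ := subs_subset_nodes (List.mem_cons_self (a := (wordOf s, wordOf t)) (l := eqs))
    rw [ev_eq _ _ h1, ev_eq _ _ h2] at this
    have ht : wordOf t ∈ {y | Rel (closure eqs (pairs (nodes ((wordOf s, wordOf t) :: eqs))))
        (wordOf t) y} := by
      have h := rel_refl (eqs := eqs) (h2 (root_mem_subs t))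
      rw [word_root] at h
      exact h
    rw [← this] at ht
    exact ht
  · intro h
    have hnodes : ∀ μ ∈ nodes ((wordOf s, wordOf t) :: eqs),
        ∃ u : (FinLang N ar).Term X, μ = root u := by
      intro μ hμ
      obtain ⟨p, hp, hμ⟩ := List.mem_flatMap.1 hμ
      obtain ⟨u, v, rfl⟩ : ∃ u v : (FinLang N ar).Term X, p = (wordOf u, wordOf v) := by
        rcases List.mem_cons.1 hp with rfl | hp
        · exact ⟨s, t, rfl⟩
        · obtain ⟨u, v, h, -⟩ := hs p hp
          exact ⟨u, v, h⟩
      simp only [parse_wordOf, List.mem_append] at hμ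
      rcases hμ with hμ | hμ
      · exact exists_root_of_mem_subs _ _ hμ
      · exact exists_root_of_mem_subs _ _ hμ
    obtain ⟨u, v, h1, h2, h3⟩ := rel_sound hs hnodes _ _ _ h
    rwa [wordOf_injective h1, wordOf_injective h2]

end Correct

end Terms

/-! ### Computability -/

theorem primrec_word : Primrec word :=
  Primrec.list_cons.comp .fst (Primrec.list_flatten.comp .snd)

theorem primrec_arity : Primrec arity :=
  Primrec.nat_mul.comp (Primrec.nat_mod.comp .id (.const 2))
    (Primrec.fst.comp (Primrec.unpair.comp (Primrec.nat_div.comp .id (.const 2))))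

theorem primrec_pstep : Primrec₂ pstep := by
  have ha : Primrec fun p : ℕ × (List Wd × List Nd) => arity p.1 := primrec_arity.comp .fst
  have hst : Primrec fun p : ℕ × (List Wd × List Nd) => p.2.1 := Primrec.fst.comp .snd
  have ht := Primrec.list_take.comp ha hst
  have hd := Primrec.list_drop.comp ha hst
  exact Primrec.pair
    (Primrec.list_cons.comp (Primrec.list_cons.comp .fst (Primrec.list_flatten.comp ht)) hd)
    (Primrec.list_cons.comp (Primrec.pair .fst ht) (Primrec.snd.comp .snd))

theorem primrec_parse : Primrec parse :=
  Primrec.list_foldr (h := fun _ p => pstep p.1 p.2) .id (.const _)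
    (primrec_pstep.comp (Primrec.fst.comp .snd) (Primrec.snd.comp .snd))

theorem primrec_nodes : Primrec nodes := by
  refine Primrec.list_flatMap .id ?_
  exact Primrec.list_append.comp (Primrec.snd.comp (primrec_parse.comp (Primrec.fst.comp .snd)))
    (Primrec.snd.comp (primrec_parse.comp (Primrec.snd.comp .snd)))

theorem primrec_pairs : Primrec pairs := by
  refine Primrec.list_flatMap .id ?_
  exact Primrec.list_map .fst (Primrec.pair (Primrec.snd.comp .fst) .snd)

theorem primrec_rel : PrimrecPred fun p : List (Nd × Nd) × (Wd × Wd) => Rel p.1 p.2.1 p.2.2 := by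
  have h : PrimrecRel fun (q : Nd × Nd) (b : Wd × Wd) => word q.1 = b.1 ∧ word q.2 = b.2 := by
    exact PrimrecPred.and
      (Primrec.eq.comp (primrec_word.comp (Primrec.fst.comp .fst)) (Primrec.fst.comp .snd))
      (Primrec.eq.comp (primrec_word.comp (Primrec.snd.comp .fst)) (Primrec.snd.comp .snd))
  exact h.exists_mem_list

theorem primrec_cond : PrimrecRel fun (q : Nd × Nd) (b : List (Wd × Wd) × List (Nd × Nd)) =>
    Cond b.1 b.2 q := by
  have rel {α : Type} [Primcodable α] {U : α → List (Nd × Nd)} {x y : α → Wd} (hU : Primrec U)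
      (hx : Primrec x) (hy : Primrec y) : PrimrecPred fun a => Rel (U a) (x a) (y a) :=
    primrec_rel.comp (hU.pair (hx.pair hy))
  have hb1 : Primrec fun p : (Nd × Nd) × (List (Wd × Wd) × List (Nd × Nd)) => p.2.1 :=
    Primrec.fst.comp .snd
  have hU : Primrec fun p : (Nd × Nd) × (List (Wd × Wd) × List (Nd × Nd)) => p.2.2 :=
    Primrec.snd.comp .snd
  have hq1 : Primrec fun p : (Nd × Nd) × (List (Wd × Wd) × List (Nd × Nd)) => p.1.1 :=
    Primrec.fst.comp .fst
  have hq2 : Primrec fun p : (Nd × Nd) × (List (Wd × Wd) × List (Nd × Nd)) => p.1.2 :=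
    Primrec.snd.comp .fst
  have hw1 := primrec_word.comp hq1
  have hw2 := primrec_word.comp hq2
  refine (Primrec.eq.comp hw1 hw2).or (PrimrecPred.or ?_ ((rel hU hw2 hw1).or
    (PrimrecPred.or ?_ ((Primrec.eq.comp (Primrec.fst.comp hq1) (Primrec.fst.comp hq2)).and ?_))))
  · have h : PrimrecRel fun (e : Wd × Wd) (q : Nd × Nd) => e = (word q.1, word q.2) :=
      Primrec.eq.comp .fst ((primrec_word.comp (Primrec.fst.comp .snd)).pair
        (primrec_word.comp (Primrec.snd.comp .snd)))
    exact h.exists_mem_list.comp hb1 .fst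
  · have h : PrimrecRel fun (r : Nd × Nd) (p : (Nd × Nd) × (List (Wd × Wd) × List (Nd × Nd))) =>
        word r.1 = word p.1.1 ∧ Rel p.2.2 (word r.2) (word p.1.2) :=
      (Primrec.eq.comp (primrec_word.comp (Primrec.fst.comp .fst)) (hw1.comp .snd)).and
        (rel (hU.comp .snd) (primrec_word.comp (Primrec.snd.comp .fst)) (hw2.comp .snd))
    exact h.exists_mem_list.comp hU .id
  · have h : PrimrecRel fun (i : ℕ) (p : (Nd × Nd) × (List (Wd × Wd) × List (Nd × Nd))) =>
        Rel p.2.2 (p.1.1.2.getD i []) (p.1.2.2.getD i []) :=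
      rel (hU.comp .snd)
        ((Primrec.list_getD []).comp (Primrec.snd.comp (hq1.comp .snd)) .fst)
        ((Primrec.list_getD []).comp (Primrec.snd.comp (hq2.comp .snd)) .fst)
    exact (h.forall_mem_list.comp
      (Primrec.list_range.comp (Primrec.list_length.comp (Primrec.snd.comp hq1))) .id).of_eq
      fun p => by simp

theorem primrec_step : Primrec fun p : (List (Wd × Wd) × List (Nd × Nd)) × List (Nd × Nd) =>
    step p.1.1 p.1.2 p.2 := by
  classical
  exact (primrec_cond.listFilter.comp (Primrec.snd.comp .fst)
    ((Primrec.fst.comp .fst).pair .snd)).of_eq fun p => by simp only [step]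

theorem primrec_closure : Primrec fun p : List (Wd × Wd) × List (Nd × Nd) => closure p.1 p.2 := by
  have h : Primrec₂ fun (p : List (Wd × Wd) × List (Nd × Nd)) U => step p.1 p.2 U := primrec_step
  exact Primrec.nat_iterate (Primrec.succ.comp (Primrec.list_length.comp .snd)) (.const []) h

theorem primrec_decides :
    PrimrecPred fun p : List (Wd × Wd) × Wd × Wd => Decides p.1 p.2.1 p.2.2 :=
  primrec_rel.comp ((primrec_closure.comp (Primrec.fst.pair (primrec_pairs.comp
    (primrec_nodes.comp (Primrec.list_cons.comp .snd .fst))))).pair .snd)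

open Classical in
/-- The algorithm on codes, for laws with words `eqs₀`: decode the presentation and the query as
words, and run congruence closure. -/
noncomputable def algo (eqs₀ : List (Wd × Wd)) (n : ℕ) : Bool :=
  ((decode n : Option (ℕ × List (Wd × Wd) × Wd × Wd)).map fun d =>
    decide (Decides (eqs₀ ++ d.2.1) d.2.2.1 d.2.2.2)).getD false

theorem computable_algo (eqs₀ : List (Wd × Wd)) : Computable (algo eqs₀) := by
  classical
  refine Primrec.to_comp ?_
  have h : PrimrecPred fun d : ℕ × List (Wd × Wd) × Wd × Wd =>
      Decides (eqs₀ ++ d.2.1) d.2.2.1 d.2.2.2 :=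
    primrec_decides.comp ((Primrec.list_append.comp (.const eqs₀)
      (Primrec.fst.comp .snd)).pair (Primrec.snd.comp .snd))
  exact Primrec.option_getD.comp (Primrec.option_map Primrec.decode (h.decide.comp .snd))
    (.const false)

/-- The code of a presentation with a query is the code of the corresponding words. -/
theorem encode_input {N : ℕ} {ar : Fin N → ℕ} (k : ℕ)
    (R : List ((FinLang N ar).Term (Fin k) × (FinLang N ar).Term (Fin k)))
    (s t : (FinLang N ar).Term (Fin k)) :
    encode (⟨k, (R, s, t)⟩ : Σ k : ℕ,
      List ((FinLang N ar).Term (Fin k) × (FinLang N ar).Term (Fin k)) ×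
        (FinLang N ar).Term (Fin k) × (FinLang N ar).Term (Fin k)) =
    encode ((k, R.map (fun p => (wordOf p.1, wordOf p.2)), wordOf s, wordOf t) :
      ℕ × List (Wd × Wd) × Wd × Wd) := by
  have hR : encode R = encode (R.map fun p => (wordOf p.1, wordOf p.2)) := by
    induction R with
    | nil => rfl
    | cons p R ih =>
      obtain ⟨u, v⟩ := p
      simp [ih, encode_eq]
  simp [hR, encode_eq]

end GroundWP

open GroundWP

/-- Any variety in a finite language which is defined by finitely many laws involving only
constants (no variables) has uniformly decidable word problem. -/
theorem uniformWP_of_finitely_many_constant_laws (N : ℕ) (ar : Fin N → ℕ)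
    (E : Finset ((FinLang N ar).Term ℕ × (FinLang N ar).Term ℕ))
    (hE : ∀ p ∈ E, IsClosedTerm p.1 ∧ IsClosedTerm p.2) :
    UniformWP (FinLang N ar) (↑E : Set ((FinLang N ar).Term ℕ × (FinLang N ar).Term ℕ)) := by
  classical
  refine ⟨algo (E.toList.map fun p => (wordOf p.1, wordOf p.2)), computable_algo _, ?_⟩
  intro k R s t
  rw [encode_input]
  simp only [algo, Encodable.encodek, Option.map_some, Option.getD_some, decide_eq_true_eq]
  apply presEqv_iff_decides
  · intro e he
    simp only [List.mem_append, List.mem_map, Finset.mem_toList] at he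
    rcases he with ⟨p, hp, rfl⟩ | ⟨p, hp, rfl⟩
    · obtain ⟨⟨c, hc⟩, ⟨d, hd⟩⟩ := hE p hp
      -- Without constants and generators there are no terms, but then there is no closed law `p`.
      let σ : ℕ → (FinLang N ar).Term (Fin k) := fun _ => c.relabel fun e => e.elim
      refine ⟨p.1.subst σ, p.2.subst σ, ?_, .law p σ hp⟩
      rw [hc, hd, wordOf_subst_closed, wordOf_subst_closed]
    · exact ⟨p.1, p.2, rfl, .rel hp⟩
  · intro p hp
    exact List.mem_append_right _ (List.mem_map_of_mem (f := fun p => (wordOf p.1, wordOf p.2)) hp)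
  · intro p hp σ
    obtain ⟨⟨c, hc⟩, ⟨d, hd⟩⟩ := hE p hp
    refine List.mem_append_left _ (List.mem_map.2 ⟨p, Finset.mem_toList.2 hp, ?_⟩)
    rw [hc, hd, wordOf_subst_closed, wordOf_subst_closed]
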